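/- arXiv:1603.00180 — 3 statements merged into one kernel-verified Lean document; each statement's English description precedes it below -/
import Mathlib

section
/- Let X be a set, let f_k, g_k : X → ℝ be sequences of real-valued functions, let f, g : X → ℝ, let r₁, r₂ ≥ 0 be real numbers, and let α, β ∈ ℝ. If (f_k) is pointwise rough statistically convergent to f on X with roughness degree r₁ and (g_k) is pointwise rough statistically convergent to g on X with roughness degree r₂, then the sequence (α·f_k + β·g_k) is pointwise rough statistically convergent to α·f + β·g on X with roughness degree |α|·r₁ + |β|·r₂. -/
open scoped Classical

/-- The set `A ⊆ ℕ` has natural density `d`. -/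
def natDensity (A : Set ℕ) (d : ℝ) : Prop :=
  Filter.Tendsto
    (fun n => (((Finset.range n).filter (fun k => k ∈ A)).card : ℝ) / (n : ℝ))
    Filter.atTop (nhds d)

/-!
The sets of natural density zero form an ideal, so rough statistical convergence is rough
convergence along the dual filter. Along an arbitrary filter, a `K`-Lipschitz map multiplies the
roughness degree by `K`, and the roughness degrees of two summands add up by the triangle
inequality.
-/

open Filter

section NatDensity

variable {A B : Set ℕ}

theorem natDensity_empty : natDensity ∅ 0 := by
  simp [natDensity]

theorem natDensity_zero_mono (hB : natDensity B 0) (hAB : A ⊆ B) : natDensity A 0 := by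
  refine squeeze_zero (fun n => by positivity) (fun n => ?_) hB
  gcongr

theorem natDensity_zero_union (hA : natDensity A 0) (hB : natDensity B 0) :
    natDensity (A ∪ B) 0 := by
  have hsum := hA.add hB
  rw [add_zero] at hsum
  refine squeeze_zero (fun n => by positivity) (fun n => ?_) hsum
  simp only [Set.mem_union, Finset.filter_or, ← add_div]
  gcongr
  exact_mod_cast Finset.card_union_le _ _

/-- The filter dual to the ideal of sets of natural density zero; convergence along it is
statistical convergence. -/
def densityOneFilter : Filter ℕ :=
  comk (natDensity · 0) natDensity_empty (fun _ hB _ hAB => natDensity_zero_mono hB hAB)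
    fun _ hA _ hB => natDensity_zero_union hA hB

theorem mem_densityOneFilter : A ∈ densityOneFilter ↔ natDensity Aᶜ 0 :=
  Iff.rfl

end NatDensity

/-- Rough convergence along a filter: `a` is a limit of `u` along `l` with roughness degree `r`,
that is, `u` is eventually within `r + ε` of `a` for every `ε > 0`. -/
def IsRoughLimit {ι E : Type*} [PseudoMetricSpace E] (l : Filter ι) (r : ℝ) (u : ι → E) (a : E) :
    Prop :=
  ∀ ε > 0, ∀ᶠ k in l, dist (u k) a < r + ε

theorem isRoughLimit_densityOneFilter_iff {E : Type*} [PseudoMetricSpace E] {r : ℝ} {u : ℕ → E}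
    {a : E} :
    IsRoughLimit densityOneFilter r u a ↔ ∀ ε > 0, natDensity {k | r + ε ≤ dist (u k) a} 0 := by
  simp only [IsRoughLimit, Filter.Eventually, mem_densityOneFilter, Set.compl_ofPred, not_lt]

namespace IsRoughLimit

variable {ι : Type*} {l : Filter ι}

theorem lipschitzWith_comp {E F : Type*} [PseudoMetricSpace E] [PseudoMetricSpace F] {r : ℝ}
    {u : ι → E} {a : E} {K : NNReal} {φ : E → F} (hφ : LipschitzWith K φ)
    (hu : IsRoughLimit l r u a) : IsRoughLimit l (K * r) (fun k => φ (u k)) (φ a) := by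
  intro ε hε
  obtain ⟨δ, hδ, hKδ⟩ := exists_pos_mul_lt hε (K : ℝ)
  filter_upwards [hu δ hδ] with k hk
  calc dist (φ (u k)) (φ a) ≤ K * dist (u k) a := hφ.dist_le_mul _ _
    _ ≤ K * (r + δ) := by gcongr
    _ = K * r + K * δ := mul_add _ _ _
    _ < K * r + ε := by gcongr

variable {E : Type*} [SeminormedAddCommGroup E] {r s : ℝ} {u v : ι → E} {a b : E}

theorem const_smul {𝕜 : Type*} [SeminormedRing 𝕜] [Module 𝕜 E] [IsBoundedSMul 𝕜 E] (c : 𝕜)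
    (hu : IsRoughLimit l r u a) : IsRoughLimit l (‖c‖ * r) (fun k => c • u k) (c • a) :=
  hu.lipschitzWith_comp (lipschitzWith_smul c)

theorem add (hu : IsRoughLimit l r u a) (hv : IsRoughLimit l s v b) :
    IsRoughLimit l (r + s) (fun k => u k + v k) (a + b) := by
  intro ε hε
  filter_upwards [hu (ε / 2) (half_pos hε), hv (ε / 2) (half_pos hε)] with k huk hvk
  calc dist (u k + v k) (a + b) ≤ dist (u k) a + dist (v k) b := dist_add_add_le _ _ _ _
    _ < (r + ε / 2) + (s + ε / 2) := add_lt_add huk hvk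
    _ = r + s + ε := by ring

end IsRoughLimit

theorem stmt_0_general {𝕜 E : Type*} [SeminormedRing 𝕜] [SeminormedAddCommGroup E] [Module 𝕜 E]
    [IsBoundedSMul 𝕜 E] {u v : ℕ → E} {a b : E} {r₁ r₂ : ℝ} (α β : 𝕜)
    (hu : ∀ ε > 0, natDensity {k | r₁ + ε ≤ dist (u k) a} 0)
    (hv : ∀ ε > 0, natDensity {k | r₂ + ε ≤ dist (v k) b} 0) :
    ∀ ε > 0, natDensity
      {k | ‖α‖ * r₁ + ‖β‖ * r₂ + ε ≤ dist (α • u k + β • v k) (α • a + β • b)} 0 := by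
  rw [← isRoughLimit_densityOneFilter_iff] at hu hv ⊢
  exact (hu.const_smul α).add (hv.const_smul β)

theorem stmt_0 {X : Type*} (f g : ℕ → X → ℝ) (F G : X → ℝ) (r₁ r₂ : ℝ)
    (hr₁ : 0 ≤ r₁) (hr₂ : 0 ≤ r₂) (α β : ℝ)
    (hf : ∀ x : X, ∀ ε > (0 : ℝ), natDensity {k : ℕ | r₁ + ε ≤ |f k x - F x|} 0)
    (hg : ∀ x : X, ∀ ε > (0 : ℝ), natDensity {k : ℕ | r₂ + ε ≤ |g k x - G x|} 0) :
    ∀ x : X, ∀ ε > (0 : ℝ),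
      natDensity
        {k : ℕ | |α| * r₁ + |β| * r₂ + ε ≤ |(α * f k x + β * g k x) - (α * F x + β * G x)|}
        0 := by
  intro x
  simp only [← Real.dist_eq] at hf hg ⊢
  exact stmt_0_general α β (hf x) (hg x)
end

section
/- Let X be a set, let f_k, g_k : X → ℝ be sequences of real-valued functions, let f, g : X → ℝ, and let r₁, r₂ ≥ 0 be real numbers. If (f_k) is pointwise rough statistically convergent to f on X with roughness degree r₁ and (g_k) is pointwise rough statistically convergent to g on X with roughness degree r₂, then the sequence (f_k + g_k) is pointwise rough statistically convergent to f + g on X with roughness degree r₁ + r₂. -/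
open scoped Classical

namespace natDensity

theorem mono_zero {A B : Set ℕ} (hB : natDensity B 0) (hAB : A ⊆ B) : natDensity A 0 := by
  refine squeeze_zero (fun n => by positivity) (fun n => ?_) hB
  gcongr

theorem union_zero {A B : Set ℕ} {d : ℝ} (hA : natDensity A d) (hB : natDensity B 0) :
    natDensity (A ∪ B) d := by
  have hAB := hA.add hB
  rw [add_zero] at hAB
  refine tendsto_of_tendsto_of_tendsto_of_le_of_le hA hAB (fun n => ?_) fun n => ?_
  · dsimp only
    gcongr
    exact Set.subset_union_left
  · rw [← add_div, ← Nat.cast_add]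
    gcongr
    simp only [Set.mem_union, Finset.filter_or]
    exact Finset.card_union_le _ _

end natDensity

/-- Rough statistical convergence of a sequence `u` to `a` with roughness degree `r`: for every
`ε > 0`, the indices `k` at which `u k` is at distance at least `r + ε` from `a` have density `0`.
Pointwise convergence of a sequence of functions is this notion at each point. -/
def RoughStatTendsto {E : Type*} [PseudoMetricSpace E] (u : ℕ → E) (a : E) (r : ℝ) : Prop :=
  ∀ ε > (0 : ℝ), natDensity {k : ℕ | r + ε ≤ dist (u k) a} 0

theorem le_dist_or_le_dist_of_add_le_dist_add {E : Type*} [SeminormedAddCommGroup E]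
    {u v a b : E} {s t : ℝ} (h : s + t ≤ dist (u + v) (a + b)) : s ≤ dist u a ∨ t ≤ dist v b :=
  le_or_le_of_add_le_add (h.trans (dist_add_add_le u v a b))

theorem RoughStatTendsto.add {E : Type*} [SeminormedAddCommGroup E] {u v : ℕ → E} {a b : E}
    {r s : ℝ} (hu : RoughStatTendsto u a r) (hv : RoughStatTendsto v b s) :
    RoughStatTendsto (fun k => u k + v k) (a + b) (r + s) := by
  intro ε hε
  refine ((hu (ε / 2) (half_pos hε)).union_zero (hv (ε / 2) (half_pos hε))).mono_zero ?_
  intro k (hk : r + s + ε ≤ dist (u k + v k) (a + b))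
  have hsplit : r + s + ε = (r + ε / 2) + (s + ε / 2) := by ring
  exact le_dist_or_le_dist_of_add_le_dist_add (hsplit ▸ hk)

theorem stmt_1_general {X E : Type*} [SeminormedAddCommGroup E] (f g : ℕ → X → E) (F G : X → E)
    (r₁ r₂ : ℝ) (hf : ∀ x, RoughStatTendsto (fun k => f k x) (F x) r₁)
    (hg : ∀ x, RoughStatTendsto (fun k => g k x) (G x) r₂) :
    ∀ x, RoughStatTendsto (fun k => f k x + g k x) (F x + G x) (r₁ + r₂) :=
  fun x => (hf x).add (hg x)

theorem stmt_1 {X : Type*} (f g : ℕ → X → ℝ) (F G : X → ℝ) (r₁ r₂ : ℝ)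
    (hr₁ : 0 ≤ r₁) (hr₂ : 0 ≤ r₂)
    (hf : ∀ x : X, ∀ ε > (0 : ℝ), natDensity {k : ℕ | r₁ + ε ≤ |f k x - F x|} 0)
    (hg : ∀ x : X, ∀ ε > (0 : ℝ), natDensity {k : ℕ | r₂ + ε ≤ |g k x - G x|} 0) :
    ∀ x : X, ∀ ε > (0 : ℝ),
      natDensity {k : ℕ | r₁ + r₂ + ε ≤ |(f k x + g k x) - (F x + G x)|} 0 :=
  stmt_1_general f g F G r₁ r₂ hf hg
end

section
/- Let X be a set, let f_k, g_k : X → ℝ be sequences of real-valued functions, let f : X → ℝ, and let r ≥ 0 be a real number. Suppose that for every x ∈ X the set {k ∈ ℕ : f_k(x) ≠ g_k(x)} has natural density 0, and that (g_k) is pointwise rough convergent (in the ordinary sense) to f on X with roughness degree r, i.e., for every x ∈ X and every ε > 0 there exists N ∈ ℕ such that |g_k(x) − f(x)| < r + ε for all k ≥ N. Then (f_k) is pointwise rough statistically convergent to f on X with roughness degree r. -/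
open scoped Classical

open Filter

namespace natDensity

variable {A B : Set ℕ}

theorem zero_mono (hB : natDensity B 0) (hAB : A ⊆ B) : natDensity A 0 := by
  refine squeeze_zero (fun n => by positivity) (fun n => ?_) hB
  gcongr

theorem zero_union (hA : natDensity A 0) (hB : natDensity B 0) : natDensity (A ∪ B) 0 := by
  have hsum := hA.add hB
  rw [add_zero] at hsum
  refine squeeze_zero (fun n => by positivity) (fun n => ?_) hsum
  rw [← add_div]
  gcongr
  simp only [Set.mem_union, Finset.filter_or]
  exact_mod_cast Finset.card_union_le _ _

theorem zero_of_finite (hA : A.Finite) : natDensity A 0 := by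
  refine squeeze_zero (fun n => by positivity) (fun n => ?_)
    (tendsto_const_div_atTop_nhds_zero_nat (hA.toFinset.card : ℝ))
  gcongr
  exact fun k hk => hA.mem_toFinset.mpr (Finset.mem_filter.mp hk).2

end natDensity

section RoughStat

variable {X Y : Type*} [PseudoMetricSpace Y] {r : ℝ} {f g : ℕ → X → Y} {F : X → Y}

/-- Pointwise rough statistical convergence of the sequence `f` to `F` with roughness degree `r`,
for functions with values in an arbitrary pseudometric space. -/
def PointwiseRoughStatTendsto (r : ℝ) (f : ℕ → X → Y) (F : X → Y) : Prop :=
  ∀ x, ∀ ε > (0 : ℝ), natDensity {k | r + ε ≤ dist (f k x) (F x)} 0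

theorem PointwiseRoughStatTendsto.of_eventually_dist_lt
    (hf : ∀ x, ∀ ε > (0 : ℝ), ∀ᶠ k in atTop, dist (f k x) (F x) < r + ε) :
    PointwiseRoughStatTendsto r f F := by
  intro x ε hε
  have hfin : {k | ¬dist (f k x) (F x) < r + ε}.Finite := by
    rw [← eventually_cofinite, Nat.cofinite_eq_atTop]
    exact hf x ε hε
  simp only [not_lt] at hfin
  exact natDensity.zero_of_finite hfin

theorem stmt_7_general (hfg : ∀ x, natDensity {k | f k x ≠ g k x} 0)
    (hg : PointwiseRoughStatTendsto r g F) : PointwiseRoughStatTendsto r f F := by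
  intro x ε hε
  have hsub : {k | r + ε ≤ dist (f k x) (F x)} ⊆
      {k | f k x ≠ g k x} ∪ {k | r + ε ≤ dist (g k x) (F x)} := by
    intro k hk
    by_cases hfgk : f k x = g k x
    · exact Or.inr (by rwa [Set.mem_ofPred_eq, ← hfgk])
    · exact Or.inl hfgk
  exact ((hfg x).zero_union (hg x ε hε)).zero_mono hsub

end RoughStat

theorem stmt_7 {X : Type*} (f g : ℕ → X → ℝ) (F : X → ℝ) (r : ℝ) (hr : 0 ≤ r)
    (heq : ∀ x : X, natDensity {k : ℕ | f k x ≠ g k x} 0)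
    (hg : ∀ x : X, ∀ ε > (0 : ℝ), ∃ N : ℕ, ∀ k ≥ N, |g k x - F x| < r + ε) :
    ∀ x : X, ∀ ε > (0 : ℝ), natDensity {k : ℕ | r + ε ≤ |f k x - F x|} 0 := by
  simp only [← Real.dist_eq] at hg ⊢
  exact stmt_7_general heq (.of_eventually_dist_lt fun x ε hε => eventually_atTop.mpr (hg x ε hε))
end
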